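/- Let V be a finite-dimensional vector space over ZMod 2 and B : V →ₗ V →ₗ ZMod 2 a symmetric bilinear form (B u w = B w u) which is nondegenerate (if B u w = 0 for all w then u = 0). Let u : V →ₗ V be self-adjoint with respect to B (B (u x) y = B x (u y) for all x, y), and set v = id + u. Then finrank(range (v ∘ u)) = finrank(range u) + finrank(range v) − finrank V. -/

import Mathlib

open Module

/-!
The kernel of `v = id + u` lies in the range of `u`, since `v x = 0` means `x = u (-x)`.
Hence restricting `v` to `range u` does not shrink its kernel, and rank-nullity for this
restriction gives `rank (v ∘ u) = rank u - dim (ker v)`, with `dim (ker v) = dim V - rank v`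
by rank-nullity for `v`. In particular `dim V ≤ rank u + rank v`, so the natural-number
subtraction in the statement does not truncate.
-/

/-- Dimension of the image of `v ∘ u` where `v = id + u` and `u` is self-adjoint
for a nondegenerate symmetric bilinear form over `ZMod 2`. -/
theorem finrank_range_comp {V : Type*} [AddCommGroup V] [Module (ZMod 2) V]
    [FiniteDimensional (ZMod 2) V]
    (B : LinearMap.BilinForm (ZMod 2) V)
    (hsymm : ∀ u w : V, B u w = B w u)
    (hnd : ∀ u : V, (∀ w : V, B u w = 0) → u = 0)
    (u : V →ₗ[ZMod 2] V)
    (hself : ∀ x y : V, B (u x) y = B x (u y))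
    (v : V →ₗ[ZMod 2] V) (hv : v = LinearMap.id + u) :
    finrank (ZMod 2) ↥(LinearMap.range (v ∘ₗ u)) =
      finrank (ZMod 2) ↥(LinearMap.range u) + finrank (ZMod 2) ↥(LinearMap.range v)
        - finrank (ZMod 2) V := by
  have hle : LinearMap.ker v ≤ LinearMap.range u := by
    intro x hx
    have hx' : x + u x = 0 := by simpa [hv] using hx
    exact ⟨-x, by rw [map_neg]; exact (eq_neg_of_add_eq_zero_left hx').symm⟩
  have hrange : LinearMap.range (v.domRestrict (LinearMap.range u)) =
      LinearMap.range (v ∘ₗ u) := by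
    rw [LinearMap.range_domRestrict, LinearMap.range_comp]
  have hker : finrank (ZMod 2) (LinearMap.ker (v.domRestrict (LinearMap.range u))) =
      finrank (ZMod 2) (LinearMap.ker v) := by
    rw [LinearMap.ker_domRestrict]
    exact (Submodule.comapSubtypeEquivOfLe hle).finrank_eq
  have h₁ := (v.domRestrict (LinearMap.range u)).finrank_range_add_finrank_ker
  have h₂ := v.finrank_range_add_finrank_ker
  rw [hrange, hker] at h₁
  omega
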